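/- arXiv:2208.13500 — 7 statements merged into one kernel-verified Lean document; each statement's English description precedes it below -/
import Mathlib

section
/- Let (H, x, Y) be an sl2-triple in a finite-dimensional Lie algebra g over a field k of characteristic zero. Then g is the internal direct sum of the integer eigenspaces of ad(H): the family of subspaces (g_i)_{i ∈ ℤ} is independent, and the supremum over all i ∈ ℤ of the subspaces g_i equals all of g. -/
/-- The `i`-eigenspace of `ad H` on a Lie algebra `g`:
`g_i = {z ∈ g | ⁅H, z⁆ = (i : k) • z}`. -/
def gwt (k : Type*) [Field k] {g : Type*} [LieRing g] [LieAlgebra k g]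
    (H : g) (i : ℤ) : Submodule k g where
  carrier := {z | ⁅H, z⁆ = (i : k) • z}
  add_mem' := by
    intro a b ha hb
    simp only [Set.mem_setOf_eq] at *
    rw [lie_add, ha, hb, smul_add]
  zero_mem' := by simp
  smul_mem' := by
    intro c a ha
    simp only [Set.mem_setOf_eq] at *
    rw [lie_smul, ha]
    exact smul_comm c ((i : k)) a


/-- Operators satisfying the `sl2` relations. -/
structure SlT {k V : Type*} [Field k] [AddCommGroup V] [Module k V]
    (H E F : Module.End k V) : Prop where
  he : ∀ v, H (E v) = E (H v) + (2 : k) • E v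
  hf : ∀ v, H (F v) = F (H v) - (2 : k) • F v
  ef : ∀ v, E (F v) = F (E v) + H v

namespace SlT

variable {k V : Type*} [Field k] [CharZero k] [AddCommGroup V] [Module k V]
  [FiniteDimensional k V] {H E F : Module.End k V}

theorem symm (t : SlT H E F) : SlT (-H) F E where
  he v := by simp [t.hf]; abel
  hf v := by simp [t.he]; abel
  ef v := by simp [t.ef]

theorem nilp (t : SlT H E F) : ∃ n : ℕ, E ^ n = 0 := by
  by_contra! hc
  let D : Module.End k (Module.End k V) := LinearMap.mulLeft k H - LinearMap.mulRight k H
  have hE : H * E = E * H + (2 : k) • E := by ext v; simp [t.he]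
  have key : ∀ n : ℕ, H * E ^ n = E ^ n * H + (2 * n : k) • E ^ n := by
    intro n
    induction n with
    | zero => simp
    | succ n ih =>
      rw [pow_succ, ← mul_assoc, ih, add_mul, mul_assoc, hE, mul_add, mul_assoc, smul_mul_assoc,
        mul_smul_comm, add_assoc, ← add_smul]
      congr 2
      push_cast
      ring
  have hli := D.eigenvectors_linearIndependent' (fun n : ℕ => (2 * n : k))
    (fun a b hab => by simpa using hab) (fun n => E ^ n) (fun n => by
      refine ⟨?_, hc n⟩
      rw [Module.End.mem_eigenspace_iff]
      simp [D, key])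
  have := hli.finite
  exact not_finite ℕ

theorem nilpF (t : SlT H E F) : ∃ n : ℕ, F ^ n = 0 := t.symm.nilp

theorem efpow (t : SlT H E F) (n : ℕ) (v : V) :
    E ((F ^ (n + 1)) v) = (F ^ (n + 1)) (E v) + ((n : k) + 1) • (F ^ n) (H v - (n : k) • v) := by
  induction n generalizing v with
  | zero => simp [t.ef]
  | succ n ih =>
    have h1 : (F ^ (n + 1 + 1)) v = (F ^ (n + 1)) (F v) := by rw [pow_succ F (n + 1)]; rfl
    have h2 : (F ^ (n + 1 + 1)) (E v) = (F ^ (n + 1)) (F (E v)) := by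
      rw [pow_succ F (n + 1)]; rfl
    have h3 : ∀ w, (F ^ (n + 1)) w = (F ^ n) (F w) := fun w => by rw [pow_succ]; rfl
    rw [h1, ih, h2, t.ef, t.hf]
    simp only [map_add, map_sub, map_smul, h3]
    push_cast
    module

/-- consequence on the kernel of `E` -/
theorem kerstep (t : SlT H E F) (n : ℕ) (v : V) (hE : E v = 0) (hF : (F ^ (n + 1)) v = 0) :
    E (H v - (n : k) • v) = 0 ∧ (F ^ n) (H v - (n : k) • v) = 0 := by
  constructor
  · have := t.he v
    simp only [hE, map_zero, smul_zero, add_zero] at this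
    simp [hE, ← this]
  · have := t.efpow n v
    rw [hF, hE, map_zero, map_zero, zero_add, eq_comm, smul_eq_zero] at this
    exact this.resolve_left (Nat.cast_add_one_ne_zero n)

/-- killed by `n` integer linear factors in `H` -/
def R (H : Module.End k V) : ℕ → V → Prop
  | 0, v => v = 0
  | n + 1, v => ∃ j : ℤ, R H n (H v - (j : k) • v)

theorem R_ker (t : SlT H E F) (n : ℕ) (v : V) (hE : E v = 0) (hF : (F ^ n) v = 0) : R H n v := by
  induction n generalizing v with
  | zero => simpa [R] using hF
  | succ n ih =>
    obtain ⟨h1, h2⟩ := t.kerstep n v hE hF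
    exact ⟨n, by simpa using ih _ h1 h2⟩

theorem R_E (t : SlT H E F) (n : ℕ) (v : V) (h : R H n (E v)) : ∃ n', R H n' v := by
  induction n generalizing v with
  | zero =>
    obtain ⟨N, hN⟩ := t.nilpF
    exact ⟨N, t.R_ker N v h (by simp [hN])⟩
  | succ n ih =>
    obtain ⟨j, hj⟩ := h
    have : H (E v) - (j : k) • E v = E (H v - ((j - 2 : ℤ) : k) • v) := by
      rw [t.he]; simp only [map_sub, map_smul]; push_cast; module
    rw [this] at hj
    obtain ⟨n', hn'⟩ := ih _ hj
    exact ⟨n' + 1, j - 2, hn'⟩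

theorem R_all (t : SlT H E F) (v : V) : ∃ n, R H n v := by
  obtain ⟨m, hm⟩ := t.nilp
  have : ∀ m : ℕ, ∀ v, (E ^ m) v = 0 → ∃ n, R H n v := by
    intro m
    induction m with
    | zero => intro v hv; exact ⟨0, by simpa [R] using hv⟩
    | succ m ih =>
      intro v hv
      obtain ⟨n, hn⟩ := ih (E v) (by rw [pow_succ] at hv; exact hv)
      exact t.R_E n v hn
  exact this m v (by simp [hm])

theorem gen_stable (H : Module.End k V) (a c : k) (v : V) (hv : v ∈ H.maxGenEigenspace a) :
    H v - c • v ∈ H.maxGenEigenspace a := by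
  have := Module.End.mapsTo_maxGenEigenspace_of_comm (Commute.refl H) a hv
  exact Submodule.sub_mem _ this (Submodule.smul_mem _ _ hv)

theorem gen_inj (H : Module.End k V) (a c : k) (hac : a ≠ c) (v : V)
    (hv : v ∈ H.maxGenEigenspace a) (h : H v = c • v) : v = 0 := by
  have h2 : v ∈ H.genEigenspace c 1 := Module.End.mem_genEigenspace_one.2 h
  exact (Submodule.disjoint_def.1 (H.disjoint_genEigenspace hac ⊤ 1)) v hv h2

theorem closure_step (H : Module.End k V) (j : ℤ) (v : V)
    (h : H v - (j : k) • v ∈ ⨆ i : ℤ, H.maxGenEigenspace (i : k)) :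
    v ∈ ⨆ i : ℤ, H.maxGenEigenspace (i : k) := by
  have key : ∀ w ∈ ⨆ i : ℤ, H.maxGenEigenspace (i : k),
      ∃ u ∈ ⨆ i : ℤ, H.maxGenEigenspace (i : k),
        w - (H u - (j : k) • u) ∈ H.maxGenEigenspace (j : k) := by
    intro w hw
    induction hw using Submodule.iSup_induction' with
    | mem i w hw =>
      by_cases hij : i = j
      · subst hij
        exact ⟨0, Submodule.zero_mem _, by simpa using hw⟩
      · let T : H.maxGenEigenspace (i : k) →ₗ[k] H.maxGenEigenspace (i : k) :=
          (H - (j : k) • LinearMap.id).restrict (fun v hv => by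
            simpa using gen_stable H (i : k) (j : k) v hv)
        have hT : Function.Injective T := by
          rw [injective_iff_map_eq_zero]
          intro a ha
          have h1 : H a.1 - (j : k) • a.1 = 0 := congrArg Subtype.val ha
          exact Subtype.ext (gen_inj H (i : k) (j : k) (by exact_mod_cast hij) a.1 a.2
            (sub_eq_zero.1 h1))
        obtain ⟨u, hu⟩ := LinearMap.injective_iff_surjective.1 hT ⟨w, hw⟩
        have h1 : H u.1 - (j : k) • u.1 = w := congrArg Subtype.val hu
        exact ⟨u.1, Submodule.mem_iSup_of_mem i u.2, by simp [h1]⟩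
    | zero => exact ⟨0, Submodule.zero_mem _, by simp⟩
    | add a b _ _ iha ihb =>
      obtain ⟨u, hu, hu'⟩ := iha
      obtain ⟨w, hw, hw'⟩ := ihb
      refine ⟨u + w, Submodule.add_mem _ hu hw, ?_⟩
      convert Submodule.add_mem _ hu' hw' using 1
      rw [map_add]; module
  obtain ⟨u, hu, hu'⟩ := key _ h
  have h2 : v - u ∈ H.maxGenEigenspace (j : k) := by
    rw [Module.End.mem_maxGenEigenspace] at hu' ⊢
    obtain ⟨n, hn⟩ := hu'
    refine ⟨n + 1, ?_⟩
    rw [pow_succ, Module.End.mul_apply]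
    convert hn using 2
    simp only [LinearMap.sub_apply, LinearMap.smul_apply, Module.End.one_apply, map_sub]
  have := Submodule.add_mem _ (Submodule.mem_iSup_of_mem (p := fun i : ℤ =>
    H.maxGenEigenspace (i : k)) j h2) hu
  simpa using this

theorem R_mem (n : ℕ) (v : V) (h : R H n v) : v ∈ ⨆ i : ℤ, H.maxGenEigenspace (i : k) := by
  induction n generalizing v with
  | zero => simp only [R] at h; simp [h]
  | succ n ih =>
    obtain ⟨j, hj⟩ := h
    exact closure_step H j v (ih _ hj)

theorem gen_top (t : SlT H E F) : ⨆ i : ℤ, H.maxGenEigenspace (i : k) = ⊤ := by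
  rw [eq_top_iff]
  intro v _
  obtain ⟨n, hn⟩ := t.R_all v
  exact R_mem n v hn

theorem ker_zero (t : SlT H E F) (m : ℕ) (c : k) (hc : ∀ i < m, c ≠ (i : k)) (u : V)
    (hE : E u = 0) (hF : (F ^ m) u = 0) (hH : H u = c • u) : u = 0 := by
  induction m with
  | zero => simpa using hF
  | succ m ih =>
    obtain ⟨_, h2⟩ := t.kerstep m u hE hF
    rw [hH, ← sub_smul, map_smul, smul_eq_zero] at h2
    exact ih (fun i hi => hc i (by omega))
      (h2.resolve_left (sub_ne_zero.2 (hc m (by omega))))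

theorem ker_ss (t : SlT H E F) (n : ℕ) (c : k) (v : V)
    (hE : E v = 0) (hF : (F ^ n) v = 0) (hv : v ∈ H.maxGenEigenspace c) : H v = c • v := by
  induction n generalizing v with
  | zero =>
    have : v = 0 := by simpa using hF
    simp [this]
  | succ n ih =>
    obtain ⟨h1, h2⟩ := t.kerstep n v hE hF
    have h3 := ih _ h1 h2 (gen_stable H c n v hv)
    by_cases hcn : c = n
    · subst hcn
      have := t.ker_zero n (n : k) (fun i hi => by exact_mod_cast hi.ne') _ h1 h2 h3
      exact sub_eq_zero.1 this
    · have := gen_inj H c n hcn _ (gen_stable H c c v hv) (by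
        simp only [map_sub, map_smul] at h3 ⊢
        rw [← sub_eq_zero] at h3 ⊢
        rw [← h3]
        module)
      exact sub_eq_zero.1 this

theorem pos_inj (t : SlT H E F) (m : ℕ) (i c : ℕ) (hc : 0 < c) (w : V)
    (hE : (E ^ m) w = 0) (hw : H w = (i : k) • w) (h : F (E w) + (c : k) • w = 0) : w = 0 := by
  induction m generalizing i c w with
  | zero => simpa using hE
  | succ m ih =>
    have h1 : E w = 0 := by
      have hH : H (E w) = ((i + 2 : ℕ) : k) • E w := by
        rw [t.he, hw, map_smul]; push_cast; module
      refine ih (i + 2) (i + 2 + c) (by omega) (E w) (by rw [pow_succ] at hE; exact hE) hH ?_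
      have := congrArg E h
      rw [map_add, t.ef, hH, map_smul, map_zero] at this
      rw [← this]; push_cast; module
    rw [h1, map_zero, zero_add, smul_eq_zero] at h
    exact h.resolve_left (by exact_mod_cast hc.ne')

theorem pos_surj (t : SlT H E F) (i : ℕ) (hi : 0 < i) (w : V) (hw : H w = (i : k) • w) :
    ∃ u, H u = (i : k) • u ∧ E (F u) = w := by
  obtain ⟨m, hm⟩ := t.nilp
  let T : H.eigenspace (i : k) →ₗ[k] H.eigenspace (i : k) :=
    (E * F).restrict (fun v hv => by
      rw [Module.End.mem_eigenspace_iff] at hv ⊢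
      rw [Module.End.mul_apply, t.he, t.hf, hv]
      simp only [map_sub, map_smul]
      module)
  have hT : Function.Injective T := by
    rw [injective_iff_map_eq_zero]
    intro a ha
    have h1 : E (F a.1) = 0 := congrArg Subtype.val ha
    have h2 : H a.1 = (i : k) • a.1 := Module.End.mem_eigenspace_iff.1 a.2
    rw [t.ef, h2] at h1
    exact Subtype.ext (t.pos_inj m i i hi a.1 (by simp [hm]) h2 h1)
  obtain ⟨u, hu⟩ := LinearMap.injective_iff_surjective.1 hT
    ⟨w, Module.End.mem_eigenspace_iff.2 hw⟩
  exact ⟨u.1, Module.End.mem_eigenspace_iff.1 u.2, congrArg Subtype.val hu⟩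

theorem gen_E (t : SlT H E F) (c : k) (v : V) (hv : v ∈ H.maxGenEigenspace c) :
    E v ∈ H.maxGenEigenspace (c + 2) := by
  rw [Module.End.mem_maxGenEigenspace] at hv ⊢
  obtain ⟨n, hn⟩ := hv
  refine ⟨n, ?_⟩
  have : ∀ n : ℕ, ∀ v, ((H - (c + 2) • 1) ^ n) (E v) = E (((H - c • 1) ^ n) v) := by
    intro n
    induction n with
    | zero => simp
    | succ n ih =>
      intro v
      rw [pow_succ, pow_succ, Module.End.mul_apply, Module.End.mul_apply, ← ih]
      congr 1
      simp only [LinearMap.sub_apply, LinearMap.smul_apply, Module.End.one_apply, map_sub, t.he,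
        map_smul]
      module
  rw [this, hn, map_zero]

theorem gen_ss (t : SlT H E F) (m : ℕ) (l : ℤ) (hl : -1 ≤ l) (v : V) (hE : (E ^ m) v = 0)
    (hv : v ∈ H.maxGenEigenspace (l : k)) : H v = (l : k) • v := by
  obtain ⟨N, hN⟩ := t.nilpF
  induction m generalizing l v with
  | zero =>
    have : v = 0 := by simpa using hE
    simp [this]
  | succ m ih =>
    have h1 := ih (l + 2) (by omega) (E v) (by rw [pow_succ] at hE; exact hE)
      (by simpa using t.gen_E _ v hv)
    obtain ⟨i, hi⟩ : ∃ i : ℕ, (i : ℤ) = l + 2 := ⟨(l + 2).toNat, by omega⟩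
    rw [← hi, Int.cast_natCast] at h1
    obtain ⟨u, hu, hu'⟩ := t.pos_surj i (by omega) _ h1
    have hik : (i : k) = l + 2 := by exact_mod_cast congrArg (Int.cast : ℤ → k) hi
    have hFu : H (F u) = (l : k) • F u := by
      rw [t.hf, hu, map_smul, hik]; module
    have hFu' : F u ∈ H.maxGenEigenspace (l : k) := by
      rw [Module.End.mem_maxGenEigenspace]
      exact ⟨1, by simp [hFu]⟩
    have h2 := t.ker_ss N (l : k) (v - F u) (by simp [hu']) (by simp [hN])
      (Submodule.sub_mem _ hv hFu')
    rw [map_sub, hFu, smul_sub] at h2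
    exact sub_left_injective h2

theorem gen_le (t : SlT H E F) (l : ℤ) (v : V)
    (hv : v ∈ H.maxGenEigenspace (l : k)) : H v = (l : k) • v := by
  rcases le_total (-1) l with h | h
  · obtain ⟨m, hm⟩ := t.nilp
    exact t.gen_ss m l h v (by simp [hm]) hv
  · obtain ⟨m, hm⟩ := t.nilpF
    have := t.symm.gen_ss m (-l) (by omega) v (by simp [hm]) (by
      rw [Module.End.mem_maxGenEigenspace] at hv ⊢
      obtain ⟨n, hn⟩ := hv
      refine ⟨n, ?_⟩
      have e : -H - ((-l : ℤ) : k) • (1 : Module.End k V) = -(H - (l : k) • 1) := by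
        push_cast; module
      rw [e, neg_pow, Module.End.mul_apply, hn, map_zero])
    simpa using this

end SlT

/-- The family of eigenspaces `(g_i)_{i ∈ ℤ}` of `ad H` is independent and
its supremum is the whole of `g`. -/
theorem stmt0 {k : Type*} [Field k] [CharZero k]
    {g : Type*} [LieRing g] [LieAlgebra k g] [FiniteDimensional k g]
    (H x Y : g) (hHx : ⁅H, x⁆ = (2 : k) • x) (hHY : ⁅H, Y⁆ = (-2 : k) • Y)
    (hxY : ⁅x, Y⁆ = H) :
    iSupIndep (fun i : ℤ => gwt k H i) ∧ (⨆ i : ℤ, gwt k H i) = ⊤ := by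
  have t : SlT (LieAlgebra.ad k g H) (LieAlgebra.ad k g x) (LieAlgebra.ad k g Y) := by
    refine ⟨fun v => ?_, fun v => ?_, fun v => ?_⟩
    · simp only [LieAlgebra.ad_apply]
      rw [leibniz_lie H x v, hHx, smul_lie, add_comm]
    · simp only [LieAlgebra.ad_apply]
      rw [leibniz_lie H Y v, hHY, smul_lie]
      module
    · simp only [LieAlgebra.ad_apply]
      rw [leibniz_lie x Y v, hxY, add_comm]
  have hg : ∀ i : ℤ, gwt k H i = (LieAlgebra.ad k g H).eigenspace (i : k) := by
    intro i
    ext v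
    rw [Module.End.mem_eigenspace_iff]
    rfl
  simp only [hg]
  refine ⟨(Module.End.eigenspaces_iSupIndep _).comp Int.cast_injective, ?_⟩
  rw [eq_top_iff, ← t.gen_top]
  refine iSup_mono fun i v hv => ?_
  exact Module.End.mem_eigenspace_iff.2 (t.gen_le i v hv)
end

section
/- Let (H, x, Y) be an sl2-triple in a finite-dimensional Lie algebra g over a field k of characteristic zero. Then for every integer m ≥ 2, the operator ad(x) maps g_{m-2} onto g_m: for every z ∈ g_m there exists w ∈ g_{m-2} with ⁅x, w⁆ = z. -/
theorem mem_gwt_iff {k : Type*} [Field k] {g : Type*} [LieRing g] [LieAlgebra k g]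
    (H : g) (i : ℤ) (z : g) : z ∈ gwt k H i ↔ ⁅H, z⁆ = (i : k) • z := Iff.rfl

theorem gwt_shift {k : Type*} [Field k] {g : Type*} [LieRing g] [LieAlgebra k g]
    (H u : g) (c : ℤ) (hu : ⁅H, u⁆ = (c : k) • u) (i : ℤ) (z : g) (hz : z ∈ gwt k H i) :
    ⁅u, z⁆ ∈ gwt k H (i + c) := by
  rw [mem_gwt_iff] at *
  rw [leibniz_lie, hu, hz, smul_lie, lie_smul, ← add_smul]
  push_cast
  rw [add_comm]

theorem gwt_pow {k : Type*} [Field k] {g : Type*} [LieRing g] [LieAlgebra k g]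
    (H x : g) (hx : ⁅H, x⁆ = (2 : k) • x) (n : ℕ) : ∀ (i : ℤ) (z : g), z ∈ gwt k H i →
    ((LieAlgebra.ad k g x) ^ n) z ∈ gwt k H (i + 2 * n) := by
  induction n with
  | zero => intro i z hz; simpa using hz
  | succ n ih =>
    intro i z hz
    have h1 := ih (i + 2) ⁅x, z⁆ (gwt_shift H x 2 (by exact_mod_cast hx) i z hz)
    rw [pow_succ, Module.End.mul_apply, LieAlgebra.ad_apply]
    convert h1 using 2
    push_cast; ring

theorem exists_pow_zero {k : Type*} [Field k] [CharZero k]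
    {g : Type*} [LieRing g] [LieAlgebra k g] [FiniteDimensional k g]
    (H x : g) (hx : ⁅H, x⁆ = (2 : k) • x) (i : ℤ) (z : g) (hz : z ∈ gwt k H i) :
    ∃ n : ℕ, ((LieAlgebra.ad k g x) ^ n) z = 0 := by
  by_contra! hne
  have hinj : Function.Injective (fun n : ℕ => ((i + 2 * n : ℤ) : k)) := by
    intro a b hab
    have h2 : (i + 2 * a : ℤ) = i + 2 * b := Int.cast_injective hab
    omega
  refine Set.infinite_range_of_injective hinj
    ((Module.End.finite_hasEigenvalue (LieAlgebra.ad k g H)).subset ?_)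
  rintro _ ⟨n, rfl⟩
  exact Module.End.hasEigenvalue_of_hasEigenvector
    ⟨Module.End.mem_eigenspace_iff.2 (gwt_pow H x hx n i z hz), hne n⟩

theorem pow_comm {k : Type*} [Field k] {g : Type*} [LieRing g] [LieAlgebra k g]
    (H x Y : g) (hHx : ⁅H, x⁆ = (2 : k) • x) (hxY : ⁅x, Y⁆ = H) (n : ℕ) :
    ∀ (m : ℤ) (z : g), z ∈ gwt k H m →
    ((LieAlgebra.ad k g x) ^ (n + 1)) ⁅Y, z⁆ = ⁅Y, ((LieAlgebra.ad k g x) ^ (n + 1)) z⁆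
      + (((n + 1) * (m + n) : ℤ) : k) • ((LieAlgebra.ad k g x) ^ n) z := by
  induction n with
  | zero =>
    intro m z hz
    rw [mem_gwt_iff] at hz
    simp [leibniz_lie x Y z, hxY, hz, add_comm]
  | succ n ih =>
    intro m z hz
    have h1 := ih (m + 2) ⁅x, z⁆ (gwt_shift H x 2 (by exact_mod_cast hHx) m z hz)
    rw [mem_gwt_iff] at hz
    rw [pow_succ _ (n + 1), Module.End.mul_apply, Module.End.mul_apply, LieAlgebra.ad_apply,
      LieAlgebra.ad_apply, leibniz_lie x Y z, hxY, hz, map_add, h1, map_smul, pow_succ _ n,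
      Module.End.mul_apply, Module.End.mul_apply, LieAlgebra.ad_apply, LieAlgebra.ad_apply]
    push_cast
    module

theorem surj_aux {k : Type*} [Field k] [CharZero k]
    {g : Type*} [LieRing g] [LieAlgebra k g]
    (H x Y : g) (hHx : ⁅H, x⁆ = (2 : k) • x) (hHY : ⁅H, Y⁆ = (-2 : k) • Y)
    (hxY : ⁅x, Y⁆ = H) (m : ℤ) (hm : 2 ≤ m) (n : ℕ) : ∀ z ∈ gwt k H m,
    ((LieAlgebra.ad k g x) ^ n) z = 0 → ∃ w ∈ gwt k H (m - 2), ⁅x, w⁆ = z := by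
  induction n with
  | zero => intro z hz h0; exact ⟨0, zero_mem _, by simpa using h0.symm⟩
  | succ n ih =>
    intro z hz h0
    set c : k := (((n + 1) * (m + n) : ℤ) : k) with hc
    have hc0 : c ≠ 0 := by
      rw [hc, Int.cast_ne_zero]
      have : 0 < ((n : ℤ) + 1) * (m + n) := mul_pos (by omega) (by omega)
      exact this.ne'
    have hYz : ⁅Y, z⁆ ∈ gwt k H (m - 2) :=
      gwt_shift H Y (-2) (by push_cast; exact hHY) m z hz
    have hxYz : ⁅x, ⁅Y, z⁆⁆ ∈ gwt k H m := by
      have := gwt_shift H x 2 (by exact_mod_cast hHx) _ _ hYz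
      simpa using this
    obtain ⟨w, hw, hwz⟩ := ih (⁅x, ⁅Y, z⁆⁆ - c • z)
      (sub_mem hxYz (Submodule.smul_mem _ _ hz)) (by
        have h1 := pow_comm H x Y hHx hxY n m z hz
        rw [h0, lie_zero, zero_add, pow_succ, Module.End.mul_apply, LieAlgebra.ad_apply] at h1
        rw [map_sub, map_smul, h1, sub_self])
    refine ⟨c⁻¹ • (⁅Y, z⁆ - w), Submodule.smul_mem _ _ (sub_mem hYz hw), ?_⟩
    rw [lie_smul, lie_sub, hwz, sub_sub_cancel, inv_smul_smul₀ hc0]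

/-- For every `m ≥ 2`, `ad x` maps `g_{m-2}` onto `g_m`. -/
theorem stmt1 {k : Type*} [Field k] [CharZero k]
    {g : Type*} [LieRing g] [LieAlgebra k g] [FiniteDimensional k g]
    (H x Y : g) (hHx : ⁅H, x⁆ = (2 : k) • x) (hHY : ⁅H, Y⁆ = (-2 : k) • Y)
    (hxY : ⁅x, Y⁆ = H) :
    ∀ m : ℤ, 2 ≤ m → ∀ z ∈ gwt k H m, ∃ w ∈ gwt k H (m - 2), ⁅x, w⁆ = z := by
  intro m hm z hz
  obtain ⟨n, hn⟩ := exists_pow_zero H x hHx m z hz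
  exact surj_aux H x Y hHx hHY hxY m hm n z hz hn
end

section
/- Let (H, x, Y) be an sl2-triple in a finite-dimensional Lie algebra g over a field k of characteristic zero. Let 𝔲 be the supremum of the subspaces g_i over all integers i ≥ 1, and let 𝔳' be the supremum of the subspaces g_i over all integers i ≥ 3. Then 𝔳' is contained in the image of 𝔲 under ad(x): every v ∈ 𝔳' can be written as v = ⁅x, u⁆ for some u ∈ 𝔲. -/
/-- The sum `⨆ {i ≥ n} g_i` of the eigenspaces of `ad H` with eigenvalue at least `n`. -/
def vsp (k : Type*) [Field k] {g : Type*} [LieRing g] [LieAlgebra k g]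
    (H : g) (n : ℤ) : Submodule k g :=
  ⨆ i : ℤ, ⨆ _ : n ≤ i, gwt k H i

section aux
variable {k : Type*} [Field k] {g : Type*} [LieRing g] [LieAlgebra k g]

theorem aux_weight {H x : g} (hHx : ⁅H, x⁆ = (2 : k) • x) {i : k} {v : g}
    (hv : ⁅H, v⁆ = i • v) (n : ℕ) :
    ⁅H, ((LieAlgebra.ad k g x) ^ n) v⁆ = (i + 2 * n) • ((LieAlgebra.ad k g x) ^ n) v := by
  induction n with
  | zero => simpa using hv
  | succ n ih =>
    rw [pow_succ', Module.End.mul_apply, LieAlgebra.ad_apply, leibniz_lie H, hHx, smul_lie, ih,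
      lie_smul, ← add_smul]
    congr 1
    push_cast
    ring

theorem aux_comm {H x Y : g} (hHx : ⁅H, x⁆ = (2 : k) • x) (hxY : ⁅x, Y⁆ = H) {i : k} {v : g}
    (hv : ⁅H, v⁆ = i • v) (n : ℕ) :
    ((LieAlgebra.ad k g x) ^ (n + 1)) ⁅Y, v⁆ = ⁅Y, ((LieAlgebra.ad k g x) ^ (n + 1)) v⁆
      + ((n + 1) * (i + n)) • ((LieAlgebra.ad k g x) ^ n) v := by
  induction n with
  | zero =>
    simp only [zero_add, pow_one, LieAlgebra.ad_apply, pow_zero, Module.End.one_apply]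
    rw [leibniz_lie x, hxY, hv]
    simp [add_comm]
  | succ n ih =>
    rw [pow_succ', Module.End.mul_apply, ih, LieAlgebra.ad_apply, lie_add, leibniz_lie x Y, hxY,
      aux_weight hHx hv, lie_smul, Module.End.mul_apply, LieAlgebra.ad_apply]
    have : ⁅x, ((LieAlgebra.ad k g x) ^ n) v⁆ = ((LieAlgebra.ad k g x) ^ (n + 1)) v := by
      rw [pow_succ', Module.End.mul_apply, LieAlgebra.ad_apply]
    rw [this]
    push_cast
    module

theorem aux_nilp [CharZero k] [FiniteDimensional k g] {H x : g} (hHx : ⁅H, x⁆ = (2 : k) • x)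
    {i : k} {v : g} (hv : ⁅H, v⁆ = i • v) : ∃ n : ℕ, ((LieAlgebra.ad k g x) ^ n) v = 0 := by
  by_contra! contra
  have hinj : Function.Injective (fun n : ℕ => i + 2 * (n : k)) := fun a b hab ↦ by
    simpa using hab
  have := ((LieAlgebra.ad k g H).eigenvectors_linearIndependent' _ hinj
    (fun n => ((LieAlgebra.ad k g x) ^ n) v) (fun n => by
      refine ⟨?_, contra n⟩
      rw [Module.End.mem_eigenspace_iff, LieAlgebra.ad_apply]
      exact aux_weight hHx hv n)).finite
  exact not_finite ℕ

theorem aux_main [CharZero k] {H x Y : g} (hHx : ⁅H, x⁆ = (2 : k) • x)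
    (hHY : ⁅H, Y⁆ = (-2 : k) • Y) (hxY : ⁅x, Y⁆ = H) {i : ℤ} (hi : 1 ≤ i) (n : ℕ) :
    ∀ v : g, ⁅H, v⁆ = (i : k) • v → ((LieAlgebra.ad k g x) ^ n) v = 0 →
      ∃ u : g, ⁅H, u⁆ = ((i - 2 : ℤ) : k) • u ∧ ⁅x, u⁆ = v := by
  induction n with
  | zero =>
    intro v _ h0
    refine ⟨0, by simp, ?_⟩
    simpa using h0.symm
  | succ n ih =>
    intro v hv h0
    have hYv : ⁅H, ⁅Y, v⁆⁆ = ((i - 2 : ℤ) : k) • ⁅Y, v⁆ := by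
      rw [leibniz_lie H, hHY, hv, smul_lie, lie_smul]
      push_cast
      module
    have hc : ((n : k) + 1) * ((i : k) + n) ≠ 0 := by
      have : ((n : ℤ) + 1) * (i + n) ≠ 0 := by positivity
      exact_mod_cast this
    set c : k := ((n : k) + 1) * ((i : k) + n) with hcdef
    obtain ⟨u, hu, hxu⟩ := ih (⁅x, ⁅Y, v⁆⁆ - c • v) (by
        rw [lie_sub, lie_smul, hv, leibniz_lie H x, hHx, hYv, smul_lie, lie_smul]
        push_cast
        module) (by
        have h := aux_comm hHx hxY hv n
        rw [h0, lie_zero, zero_add, pow_succ, Module.End.mul_apply, LieAlgebra.ad_apply] at h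
        rw [map_sub, map_smul, h, sub_self])
    refine ⟨c⁻¹ • (⁅Y, v⁆ - u), ?_, ?_⟩
    · rw [lie_smul, lie_sub, hYv, hu, ← smul_sub, smul_comm]
    · rw [lie_smul, lie_sub, hxu, sub_sub_cancel, inv_smul_smul₀ hc]

end aux

/-- With `𝔲 = ⨆ {i ≥ 1} g_i` and `𝔳' = ⨆ {i ≥ 3} g_i`, one has `𝔳' ⊆ ⁅x, 𝔲⁆`. -/
theorem stmt5 {k : Type*} [Field k] [CharZero k]
    {g : Type*} [LieRing g] [LieAlgebra k g] [FiniteDimensional k g]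
    (H x Y : g) (hHx : ⁅H, x⁆ = (2 : k) • x) (hHY : ⁅H, Y⁆ = (-2 : k) • Y)
    (hxY : ⁅x, Y⁆ = H) :
    ∀ v ∈ vsp k H 3, ∃ u ∈ vsp k H 1, ⁅x, u⁆ = v := by
  intro v hv
  have key : vsp k H 3 ≤ (vsp k H 1).map (LieAlgebra.ad k g x) := by
    refine iSup₂_le fun i hi w hw => ?_
    rw [mem_gwt_iff] at hw
    obtain ⟨n, hn⟩ := aux_nilp hHx hw
    obtain ⟨u, hu, hxu⟩ := aux_main hHx hHY hxY (by omega) n w hw hn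
    refine ⟨u, ?_, hxu⟩
    have : gwt k H (i - 2) ≤ vsp k H 1 :=
      le_iSup₂_of_le (f := fun (i : ℤ) (_ : 1 ≤ i) => gwt k H i) (i - 2) (by omega) le_rfl
    exact this hu
  obtain ⟨u, hu, hxu⟩ := key hv
  exact ⟨u, hu, hxu⟩
end

section
/- Let (H, x, Y) be an sl2-triple in a finite-dimensional Lie algebra g over a field k of characteristic zero. If the eigenspace g_1 is zero, then g_m = 0 for every odd integer m. -/
/-- If `x` is even, i.e. `g_1 = 0`, then `g_m = 0` for every odd integer `m`. -/
theorem stmt8 {k : Type*} [Field k] [CharZero k]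
    {g : Type*} [LieRing g] [LieAlgebra k g] [FiniteDimensional k g]
    (H x Y : g) (hHx : ⁅H, x⁆ = (2 : k) • x) (hHY : ⁅H, Y⁆ = (-2 : k) • Y)
    (hxY : ⁅x, Y⁆ = H) (heven : gwt k H 1 = ⊥) :
    ∀ m : ℤ, Odd m → gwt k H m = ⊥ := by
  intro m hm
  rw [Submodule.eq_bot_iff]
  intro z hz
  have hz' : ⁅H, z⁆ = (m : k) • z := hz
  by_contra hz0
  by_cases hH : H = 0
  · rw [hH, zero_lie] at hz'
    rcases smul_eq_zero.mp hz'.symm with h | h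
    · have : m = 0 := by exact_mod_cast h
      subst this
      exact absurd hm (by decide)
    · exact hz0 h
  have t : IsSl2Triple H x Y :=
    { h_ne_zero := hH
      lie_e_f := hxY
      lie_h_e_nsmul := by rw [hHx, two_smul, two_nsmul]
      lie_h_f_nsmul := by rw [hHY, neg_smul, two_smul, two_nsmul] }
  let evals (n : ℕ) : k := (m : k) + 2 * (n : k)
  let vecs (n : ℕ) : g := ((LieModule.toEnd k g g x) ^ n) z
  have hvec (n : ℕ) : ⁅H, vecs n⁆ = evals n • vecs n := t.lie_h_pow_toEnd_e hz' n
  have hex : ∃ n, vecs n = 0 := by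
    by_contra! contra
    have h_inj : Function.Injective evals := fun a b hab ↦ by
      simpa [evals, add_right_inj, mul_eq_mul_left_iff, Nat.cast_inj] using hab
    have hli := Module.End.eigenvectors_linearIndependent' (LieModule.toEnd k g g H) evals h_inj
      vecs (fun n ↦ ⟨by
        rw [Module.End.mem_eigenspace_iff, LieModule.toEnd_apply_apply]
        exact hvec n, contra n⟩)
    have := hli.finite
    exact not_finite ℕ
  obtain ⟨n, hn_ne, hn_zero⟩ := Nat.exists_not_and_succ_of_not_zero_of_exists
    (p := fun n ↦ vecs n = 0) (by simpa [vecs] using hz0) hex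
  have P : t.HasPrimitiveVectorWith (vecs n) (evals n) :=
    { ne_zero := hn_ne
      lie_h := hvec n
      lie_e := by
        rw [← hn_zero]
        exact IsSl2Triple.lie_e_pow_toEnd_e n }
  obtain ⟨N, hN⟩ := P.exists_nat
  have hNm : m + 2 * (n : ℤ) = N := by
    have : ((m + 2 * (n : ℤ) : ℤ) : k) = ((N : ℤ) : k) := by
      push_cast
      exact hN
    exact_mod_cast this
  obtain ⟨j, hj⟩ : ∃ j : ℕ, N = 2 * j + 1 := by
    obtain ⟨a, ha⟩ := hm
    exact ⟨N / 2, by omega⟩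
  have hne := P.pow_toEnd_f_ne_zero_of_eq_nat hN (i := j) (by omega)
  have hw := P.lie_h_pow_toEnd_f j
  apply hne
  rw [← Submodule.mem_bot k, ← heven]
  change ⁅H, _⁆ = ((1 : ℤ) : k) • _
  rw [hw, hN, hj]
  congr 1
  push_cast
  ring
end

section
/- Let (H, x, Y) be an sl2-triple in a finite-dimensional Lie algebra g over a field k of characteristic zero, and let B : g → g → k be a nondegenerate symmetric invariant bilinear form on g (invariance: B(⁅z, a⁆, b) + B(a, ⁅z, b⁆) = 0 for all z, a, b ∈ g). Then for every integer i the restriction of B gives a nondegenerate pairing between g_i and g_{-i}: for every nonzero a ∈ g_i there exists b ∈ g_{-i} with B(a, b) ≠ 0. -/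
section helper
variable {k V : Type*} [Field k] [CharZero k] [AddCommGroup V] [Module k V]

lemma aux_shift (D e : Module.End k V) (s : k) (hDe : ∀ v, D (e v) = e (D v) + s • e v)
    (v a : V) (m : k) (hv : D v = m • v + a) (n : ℕ) :
    D ((e ^ n) v) = (m + s * n) • (e ^ n) v + (e ^ n) a := by
  induction n with
  | zero => simp [hv]
  | succ n ih =>
    simp only [pow_succ', Module.End.mul_apply] at *
    rw [hDe, ih, map_add, map_smul]
    push_cast
    module

lemma aux_nilp_s11 [FiniteDimensional k V] (D e : Module.End k V) (s : k) (hs : s ≠ 0)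
    (hDe : ∀ v, D (e v) = e (D v) + s • e v)
    (v : V) (m : k) (hv : D v = m • v) : ∃ n : ℕ, (e ^ n) v = 0 := by
  by_contra! hne
  have hfin : Set.Finite {μ | D.HasEigenvalue μ} := Module.End.finite_hasEigenvalue D
  have hinj : Function.Injective (fun n : ℕ => m + s * (n : k)) := by
    intro a b hab
    simpa [hs] using hab
  refine Set.infinite_range_of_injective hinj (hfin.subset ?_)
  rintro _ ⟨n, rfl⟩
  refine Module.End.hasEigenvalue_of_hasEigenvector (x := (e ^ n) v) ⟨?_, hne n⟩
  rw [Module.End.mem_eigenspace_iff]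
  simpa using aux_shift D e s hDe v 0 m (by simpa using hv) n

lemma aux_nilp2 [FiniteDimensional k V] (D e : Module.End k V) (s : k) (hs : s ≠ 0)
    (hDe : ∀ v, D (e v) = e (D v) + s • e v)
    (v a : V) (m : k) (hv : D v = m • v + a) (ha : D a = m • a) : ∃ n : ℕ, (e ^ n) v = 0 := by
  obtain ⟨p, hp⟩ := aux_nilp_s11 D e s hs hDe a m ha
  have h1 := aux_shift D e s hDe v a m hv p
  rw [hp, add_zero] at h1
  obtain ⟨q, hq⟩ := aux_nilp_s11 D e s hs hDe _ _ h1
  exact ⟨q + p, by rw [pow_add, Module.End.mul_apply, hq]⟩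

lemma aux_ef (D e f : Module.End k V)
    (hDf : ∀ v, D (f v) = f (D v) + (-2 : k) • f v)
    (hef : ∀ v, e (f v) = f (e v) + D v)
    (v a : V) (m : k) (hv : D v = m • v + a) (hev : e v = 0) (n : ℕ) :
    e ((f ^ (n + 1)) v) = ((n : k) + 1) • ((m - n) • (f ^ n) v + (f ^ n) a) := by
  induction n with
  | zero => simp [hef, hev, hv]
  | succ n ih =>
    have h1 := aux_shift D f (-2) hDf v a m hv (n + 1)
    rw [pow_succ', Module.End.mul_apply, hef, ih, h1]
    simp only [pow_succ', Module.End.mul_apply, map_add, map_smul]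
    push_cast
    module

lemma aux_fe (D e f : Module.End k V)
    (hDe : ∀ v, D (e v) = e (D v) + (2 : k) • e v)
    (hef : ∀ v, e (f v) = f (e v) + D v)
    (w : V) (m : k) (hw : D w = m • w) (p : ℕ) :
    (e ^ (p + 1)) (f w) = f ((e ^ (p + 1)) w) + (((p : k) + 1) * (m + p)) • (e ^ p) w := by
  induction p with
  | zero => simp [hef, hw]
  | succ p ih =>
    have h1 := aux_shift D e 2 hDe w 0 m (by simpa using hw) (p + 1)
    rw [pow_succ', Module.End.mul_apply, ih, map_add, hef, h1]
    simp only [pow_succ', Module.End.mul_apply, map_add, map_smul, map_zero]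
    push_cast
    module

lemma aux_surj (D e f : Module.End k V)
    (hDe : ∀ v, D (e v) = e (D v) + (2 : k) • e v)
    (hDf : ∀ v, D (f v) = f (D v) + (-2 : k) • f v)
    (hef : ∀ v, e (f v) = f (e v) + D v) (m : ℕ) (p : ℕ) :
    ∀ w : V, D w = ((m : k) + 2) • w → (e ^ p) w = 0 → ∃ u, D u = (m : k) • u ∧ e u = w := by
  induction p with
  | zero => intro w _ h; exact ⟨0, by simp, by simpa using h.symm⟩
  | succ p ih =>
    intro w hw h
    have h1 := aux_fe D e f hDe hef w _ hw p
    rw [h, map_zero, zero_add, pow_succ, Module.End.mul_apply] at h1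
    set r : k := ((p : k) + 1) * ((m : k) + 2 + p) with hr
    have hr0 : r ≠ 0 := by
      have : r = (((p + 1) * (m + 2 + p) : ℕ) : k) := by rw [hr]; push_cast; ring
      rw [this]
      exact Nat.cast_ne_zero.mpr (by positivity)
    have hDfw : D (f w) = (m : k) • f w := by
      rw [hDf, hw, map_smul]; module
    obtain ⟨u, hu, heu⟩ := ih (w - r⁻¹ • e (f w))
      (by rw [map_sub, map_smul, hDe, hDfw, hw, map_smul]; module)
      (by rw [map_sub, map_smul, h1, smul_smul, inv_mul_cancel₀ hr0, one_smul, sub_self])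
    refine ⟨u + r⁻¹ • f w, ?_, ?_⟩
    · rw [map_add, map_smul, hu, hDfw]; module
    · rw [map_add, map_smul, heu]; module

lemma aux_prim [FiniteDimensional k V] (D e f : Module.End k V)
    (hDf : ∀ v, D (f v) = f (D v) + (-2 : k) • f v)
    (hef : ∀ v, e (f v) = f (e v) + D v) (m : ℕ)
    (v a : V) (hv : D v = (m : k) • v + a) (ha : D a = (m : k) • a)
    (hev : e v = 0) (hea : e a = 0) : a = 0 := by
  classical
  by_cases hv0 : v = 0
  · simpa [hv0] using hv.symm
  have hex := aux_nilp2 D f (-2) (by norm_num) hDf v a m hv ha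
  obtain ⟨n, hn⟩ : ∃ n, Nat.find hex = n + 1 := by
    apply Nat.exists_eq_succ_of_ne_zero
    intro h0
    have := Nat.find_spec hex
    rw [h0] at this
    exact hv0 (by simpa using this)
  have h1 : (f ^ (n + 1)) v = 0 := by rw [← hn]; exact Nat.find_spec hex
  have h2 : (f ^ n) v ≠ 0 := Nat.find_min hex (by omega)
  have h3 := aux_ef D e f hDf hef v a m hv hev n
  have hcast : ∀ n : ℕ, (n : k) + 1 ≠ 0 := fun n => Nat.cast_add_one_ne_zero n
  rw [h1, map_zero, eq_comm, smul_eq_zero_iff_right (hcast n)] at h3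
  have hDa := aux_shift D f (-2) hDf a 0 m (by simpa using ha) n
  have hDv := aux_shift D f (-2) hDf v a m hv n
  have h4 : ((m : k) - n) • (f ^ n) a = 0 := by
    have h5 := congrArg D h3
    rw [map_add, map_smul, hDa, hDv, map_zero, map_zero, add_zero] at h5
    have h6 : ((m : k) - n) • (f ^ n) a
        + ((m : k) + -2 * n) • (((m : k) - n) • (f ^ n) v + (f ^ n) a) = 0 := by
      rw [← h5]; module
    simpa [h3] using h6
  have hmn : m = n := by
    by_contra hne
    have hne' : (m : k) - n ≠ 0 := sub_ne_zero.mpr (by exact_mod_cast hne)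
    have h5 := (smul_eq_zero_iff_right hne').mp h4
    rw [h5, add_zero, smul_eq_zero_iff_right hne'] at h3
    exact h2 h3
  subst hmn
  have h7 : (f ^ m) a = 0 := by simpa using h3
  have key : ∀ j, j ≤ m → (f ^ (m - j)) a = 0 := by
    intro j
    induction j with
    | zero => intro _; simpa using h7
    | succ j ih =>
      intro hj
      have h8 := ih (by omega)
      obtain ⟨q, hq⟩ : ∃ q, m - (j + 1) = q := ⟨_, rfl⟩
      rw [show m - j = q + 1 by omega] at h8
      rw [hq]
      have h9 := aux_ef D e f hDf hef a 0 m (by simpa using ha) hea q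
      have hne' : (m : k) - q ≠ 0 := sub_ne_zero.mpr (by
        have : m ≠ q := by omega
        exact_mod_cast this)
      rw [h8, map_zero, eq_comm, smul_eq_zero_iff_right (hcast q), map_zero, add_zero,
        smul_eq_zero_iff_right hne'] at h9
      exact h9
  simpa using key m le_rfl

lemma aux_main_s11 [FiniteDimensional k V] (D e f : Module.End k V)
    (hDe : ∀ v, D (e v) = e (D v) + (2 : k) • e v)
    (hDf : ∀ v, D (f v) = f (D v) + (-2 : k) • f v)
    (hef : ∀ v, e (f v) = f (e v) + D v) (p : ℕ) :
    ∀ (m : ℕ) (c a : V), D c = (m : k) • c + a → D a = (m : k) • a → (e ^ p) c = 0 → a = 0 := by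
  induction p with
  | zero =>
    intro m c a hc ha h
    have : c = 0 := by simpa using h
    simpa [this] using hc.symm
  | succ p ih =>
    intro m c a hc ha h
    rw [pow_succ, Module.End.mul_apply] at h
    have hea : e a = 0 := by
      refine ih (m + 2) (e c) (e a) ?_ ?_ h
      · rw [hDe, hc, map_add, map_smul]; push_cast; module
      · rw [hDe, ha, map_smul]; push_cast; module
    obtain ⟨u, hu, heu⟩ := aux_surj D e f hDe hDf hef m p (e c)
      (by rw [hDe, hc, map_add, map_smul, hea]; module) h
    refine aux_prim D e f hDf hef m (c - u) a ?_ ha (by rw [map_sub, heu, sub_self]) hea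
    rw [map_sub, hc, hu]; module

lemma aux_int [FiniteDimensional k V] (D e f : Module.End k V)
    (hDe : ∀ v, D (e v) = e (D v) + (2 : k) • e v)
    (hDf : ∀ v, D (f v) = f (D v) + (-2 : k) • f v)
    (hef : ∀ v, e (f v) = f (e v) + D v) (i : ℤ) (c a : V)
    (hc : D c = (i : k) • c + a) (ha : D a = (i : k) • a) : a = 0 := by
  obtain ⟨n, rfl | rfl⟩ := i.eq_nat_or_neg
  · simp only [Int.cast_natCast] at hc ha
    obtain ⟨p, hp⟩ := aux_nilp2 D e 2 (by norm_num) hDe c a n hc ha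
    exact aux_main_s11 D e f hDe hDf hef p n c a hc ha hp
  · simp only [Int.cast_natCast, Int.cast_neg] at hc ha
    obtain ⟨p, hp⟩ := aux_nilp2 D f (-2) (by norm_num) hDf c a _ hc ha
    have := aux_main_s11 (-D) f e
      (by intro v; simp only [LinearMap.neg_apply, hDf, map_neg]; module)
      (by intro v; simp only [LinearMap.neg_apply, hDe, map_neg]; module)
      (by intro v; simp only [LinearMap.neg_apply, hef]; module) p n c (-a)
      (by rw [LinearMap.neg_apply, hc]; module)
      (by rw [LinearMap.neg_apply, map_neg, ha]; module) hp
    simpa using this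

end helper

/-- For a nondegenerate symmetric invariant bilinear form `B` on `g`, the
restriction of `B` gives a nondegenerate pairing between `g_i` and `g_{-i}`. -/
theorem stmt11 {k : Type*} [Field k] [CharZero k]
    {g : Type*} [LieRing g] [LieAlgebra k g] [FiniteDimensional k g]
    (H x Y : g) (hHx : ⁅H, x⁆ = (2 : k) • x) (hHY : ⁅H, Y⁆ = (-2 : k) • Y)
    (hxY : ⁅x, Y⁆ = H)
    (B : g →ₗ[k] g →ₗ[k] k)
    (hsymm : ∀ a b : g, B a b = B b a)
    (hnondeg : ∀ a : g, (∀ b : g, B a b = 0) → a = 0)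
    (hinv : ∀ z a b : g, B ⁅z, a⁆ b + B a ⁅z, b⁆ = 0) :
    ∀ i : ℤ, ∀ a ∈ gwt k H i, a ≠ 0 → ∃ b ∈ gwt k H (-i), B a b ≠ 0 := by
  intro i a ha ha0
  have ha' : ⁅H, a⁆ = (i : k) • a := ha
  let D : Module.End k g := LieAlgebra.ad k g H
  by_cases hmem : a ∈ LinearMap.range (D - (i : k) • (1 : Module.End k g))
  · exfalso
    obtain ⟨c, hc⟩ := hmem
    have hc' : ⁅H, c⁆ - (i : k) • c = a := by simpa [D] using hc
    refine ha0 (aux_int D (LieAlgebra.ad k g x) (LieAlgebra.ad k g Y) ?_ ?_ ?_ i c a ?_ ?_)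
    · intro v
      simp only [D, LieAlgebra.ad_apply]
      rw [leibniz_lie H x v, hHx, smul_lie, add_comm]
    · intro v
      simp only [D, LieAlgebra.ad_apply]
      rw [leibniz_lie H Y v, hHY, smul_lie, add_comm]
    · intro v
      simp only [D, LieAlgebra.ad_apply]
      rw [leibniz_lie x Y v, hxY, add_comm]
    · simp only [D, LieAlgebra.ad_apply]
      rw [← hc']; module
    · simpa [D] using ha'
  · obtain ⟨φ, hφa, hφ⟩ := Submodule.exists_le_ker_of_notMem hmem
    have hBinj : Function.Injective B := by
      rw [injective_iff_map_eq_zero]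
      intro b hb
      exact hnondeg b (fun y => by rw [hb]; rfl)
    have hBsurj : Function.Surjective B :=
      (LinearMap.injective_iff_surjective_of_finrank_eq_finrank
        (Subspace.dual_finrank_eq (K := k) (V := g)).symm).mp hBinj
    obtain ⟨b, rfl⟩ := hBsurj φ
    refine ⟨b, ?_, by rwa [hsymm]⟩
    change ⁅H, b⁆ = ((-i : ℤ) : k) • b
    have h0 : ⁅H, b⁆ + (i : k) • b = 0 := by
      apply hnondeg
      intro y
      have h1 : B b (⁅H, y⁆ - (i : k) • y) = 0 := by
        have := hφ (LinearMap.mem_range_self (D - (i : k) • (1 : Module.End k g)) y)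
        simpa [D] using this
      have h2 := hinv H b y
      simp only [map_add, map_smul, map_sub, LinearMap.add_apply, LinearMap.smul_apply] at *
      linear_combination h2 - h1
    rw [eq_neg_of_add_eq_zero_left h0]
    push_cast
    module
end

section
/- Let (H, x, Y) be an sl2-triple in a finite-dimensional Lie algebra g over a field k of characteristic zero. Then the centralizer of x in g is contained in the Jacobson–Morozov parabolic subalgebra: every z ∈ g with ⁅x, z⁆ = 0 lies in the supremum of the subspaces g_i over all integers i ≥ 0. -/
/-- The commutation relation `E F^(n+1) = F^(n+1) E + (n+1) F^n (H - n)`. -/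
theorem aux_comm_s12 {k A : Type*} [Field k] [Ring A] [Algebra k A] (E F T : A)
    (hEF : E * F = F * E + T) (hTF : T * F = F * T - (2 : k) • F) (n : ℕ) :
    E * F ^ (n + 1) = F ^ (n + 1) * E + ((n : k) + 1) • (F ^ n * (T - (n : k) • 1)) := by
  induction n with
  | zero => simp [hEF]
  | succ n ih =>
    rw [pow_succ F (n + 1), ← mul_assoc, ih, add_mul, mul_assoc, hEF, smul_mul_assoc, mul_assoc,
      sub_mul, hTF, smul_mul_assoc, one_mul, mul_assoc (F ^ (n + 1)) F E, pow_succ F n]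
    simp only [mul_add, mul_sub, mul_smul_comm, mul_one, mul_assoc, Nat.cast_succ]
    module

/-- `F` is nilpotent if `[T, F] = -2 F` in a finite-dimensional algebra. -/
theorem aux_nilp_s12 {k A : Type*} [Field k] [CharZero k] [Ring A] [Algebra k A]
    [FiniteDimensional k A] (F T : A) (hTF : T * F = F * T - (2 : k) • F) :
    ∃ n : ℕ, F ^ n = 0 := by
  by_contra! hne
  have hpow : ∀ n : ℕ, T * F ^ n - F ^ n * T = (-2 * (n : k)) • F ^ n := by
    intro n
    induction n with
    | zero => simp
    | succ n ih =>
      have h1 : T * F ^ n = F ^ n * T + (-2 * (n : k)) • F ^ n := by rw [← ih]; abel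
      rw [pow_succ, ← mul_assoc, h1, add_mul, mul_assoc, hTF, smul_mul_assoc]
      simp only [mul_sub, mul_smul_comm, mul_assoc, Nat.cast_succ]
      module
  let D : Module.End k A := LinearMap.mulLeft k T - LinearMap.mulRight k T
  have hli := Module.End.eigenvectors_linearIndependent' D (fun n : ℕ => -2 * (n : k))
    (fun a b h => by simpa using h) (fun n => F ^ n)
    (fun n => ⟨by
      rw [Module.End.mem_eigenspace_iff]
      simpa [D] using hpow n, hne n⟩)
  have := hli.finite
  exact not_finite ℕ

/-- `H - n` is surjective on the sum of the eigenspaces with eigenvalues `0, …, n-1`. -/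
theorem aux_surj_s12 {k : Type*} [Field k] [CharZero k]
    {g : Type*} [LieRing g] [LieAlgebra k g] (H : g) (n : ℕ) :
    (⨆ i : ℕ, ⨆ _ : i < n, gwt k H i) ≤
      (⨆ i : ℕ, ⨆ _ : i < n, gwt k H i).map
        (LieAlgebra.ad k g H - (n : k) • (1 : Module.End k g)) := by
  refine iSup₂_le fun i hi w hw => ?_
  have hne : (i : k) - n ≠ 0 := sub_ne_zero.2 (by exact_mod_cast hi.ne)
  have hw' : ⁅H, w⁆ = (i : k) • w := by
    have : ⁅H, w⁆ = (((i : ℕ) : ℤ) : k) • w := hw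
    simpa using this
  refine ⟨((i : k) - n)⁻¹ • w, ?_, ?_⟩
  · exact Submodule.smul_mem _ _ (Submodule.mem_iSup_of_mem i (Submodule.mem_iSup_of_mem hi hw))
  · simp only [LinearMap.sub_apply, LieAlgebra.ad_apply, LinearMap.smul_apply,
      Module.End.one_apply, lie_smul, hw']
    rw [smul_comm (n : k), ← smul_sub, ← sub_smul, smul_smul, inv_mul_cancel₀ hne, one_smul]

/-- The centralizer of `x` in `g` is contained in the Jacobson–Morozov
parabolic subalgebra `𝔭 = ⨆ {i ≥ 0} g_i`. -/
theorem stmt12 {k : Type*} [Field k] [CharZero k]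
    {g : Type*} [LieRing g] [LieAlgebra k g] [FiniteDimensional k g]
    (H x Y : g) (hHx : ⁅H, x⁆ = (2 : k) • x) (hHY : ⁅H, Y⁆ = (-2 : k) • Y)
    (hxY : ⁅x, Y⁆ = H) :
    ∀ z : g, ⁅x, z⁆ = 0 → z ∈ vsp k H 0 := by
  intro z hz
  set E : Module.End k g := LieAlgebra.ad k g x with hE
  set F : Module.End k g := LieAlgebra.ad k g Y with hF
  set T : Module.End k g := LieAlgebra.ad k g H with hT
  have hEF : E * F = F * E + T := by
    ext w
    simp [hE, hF, hT, ← hxY]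
  have hTF : T * F = F * T - (2 : k) • F := by
    ext w
    have := leibniz_lie H Y w
    rw [hHY, smul_lie] at this
    simp only [hF, hT, Module.End.mul_apply, LinearMap.sub_apply, LinearMap.smul_apply,
      LieAlgebra.ad_apply, this]
    module
  have key : ∀ n : ℕ, ∀ z : g, ⁅x, z⁆ = 0 → (F ^ n) z = 0 →
      z ∈ ⨆ i : ℕ, ⨆ _ : i < n, gwt k H i := by
    intro n
    induction n with
    | zero =>
      intro z _ h
      have h0 : z = 0 := by simpa using h
      rw [h0]
      exact Submodule.zero_mem _
    | succ n ih =>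
      intro z hz h
      have hEz : E z = 0 := hz
      have h1 := LinearMap.congr_fun (aux_comm_s12 (k := k) E F T hEF hTF n) z
      simp only [Module.End.mul_apply, LinearMap.add_apply, LinearMap.smul_apply, h, hEz,
        map_zero, zero_add] at h1
      have h2 : (F ^ n) ((T - (n : k) • (1 : Module.End k g)) z) = 0 :=
        (smul_eq_zero.1 h1.symm).resolve_left (Nat.cast_add_one_ne_zero n)
      have h3 : ⁅x, (T - (n : k) • (1 : Module.End k g)) z⁆ = 0 := by
        have h4 : ⁅x, H⁆ = -((2 : k) • x) := by rw [← hHx, lie_skew]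
        simp [hT, leibniz_lie x H z, h4, hz]
      obtain ⟨u, hu, hu'⟩ := aux_surj_s12 H n (ih _ h3 h2)
      have hmono : (⨆ i : ℕ, ⨆ _ : i < n, gwt k H i) ≤
          ⨆ i : ℕ, ⨆ _ : i < n + 1, gwt k H i :=
        iSup₂_le fun i hi => le_iSup₂_of_le i (by omega) le_rfl
      have hd : z - u ∈ gwt k H (n : ℤ) := by
        change ⁅H, z - u⁆ = ((n : ℤ) : k) • (z - u)
        have h5 : (T - (n : k) • (1 : Module.End k g)) (z - u) = 0 := by
          rw [map_sub, sub_eq_zero]; exact hu'.symm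
        have h6 : ⁅H, z - u⁆ - (n : k) • (z - u) = 0 := h5
        rw [Int.cast_natCast]
        exact sub_eq_zero.1 h6
      have h7 : z - u ∈ ⨆ i : ℕ, ⨆ _ : i < n + 1, gwt k H i :=
        Submodule.mem_iSup_of_mem n (Submodule.mem_iSup_of_mem (Nat.lt_succ_self n) hd)
      have h8 := Submodule.add_mem _ h7 (hmono hu)
      rwa [sub_add_cancel] at h8
  obtain ⟨n, hn⟩ := aux_nilp_s12 (k := k) F T hTF
  have h9 := key n z hz (by rw [hn]; rfl)
  have hle : (⨆ i : ℕ, ⨆ _ : i < n, gwt k H i) ≤ vsp k H 0 :=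
    iSup₂_le fun i _ => le_iSup₂_of_le (f := fun (j : ℤ) (_ : 0 ≤ j) => gwt k H j)
      (i : ℤ) (Int.natCast_nonneg i) le_rfl
  exact hle h9
end

section
/- Let (H, x, Y) be an sl2-triple in a finite-dimensional Lie algebra g over a field k of characteristic zero. Then for every integer i, the eigenspaces g_i and g_{-i} of ad(H) have the same dimension. -/
lemma nilp_aux {k : Type*} [Field k] [CharZero k]
    {V : Type*} [AddCommGroup V] [Module k V] [FiniteDimensional k V]
    (h e : Module.End k V) (c : k) (hc : c ≠ 0) (he : h * e - e * h = c • e) :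
    IsNilpotent e := by
  by_contra hn
  have hne : ∀ n : ℕ, e ^ n ≠ 0 := fun n h0 => hn ⟨n, h0⟩
  let T : Module.End k (Module.End k V) := LinearMap.mulLeft k h - LinearMap.mulRight k h
  have hT : ∀ n : ℕ, T (e ^ n) = ((n : k) * c) • e ^ n := by
    intro n
    induction n with
    | zero => simp [T]
    | succ n ih =>
      simp only [T, LinearMap.sub_apply, LinearMap.mulLeft_apply, LinearMap.mulRight_apply] at ih ⊢
      have : h * e ^ (n + 1) - e ^ (n + 1) * h
          = (h * e ^ n - e ^ n * h) * e + e ^ n * (h * e - e * h) := by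
        rw [pow_succ]; noncomm_ring
      rw [this, ih, he, smul_mul_assoc, mul_smul_comm, ← pow_succ, ← add_smul]
      congr 1
      push_cast
      ring
  have hinj : Function.Injective (fun n : ℕ => (n : k) * c) := by
    intro a b hab
    simpa [hc] using hab
  have := T.eigenvectors_linearIndependent' (fun n : ℕ => (n : k) * c) hinj (fun n => e ^ n)
    (fun n => ⟨Module.End.mem_eigenspace_iff.2 (hT n), hne n⟩)
  have := this.finite
  exact not_finite ℕ

lemma exp_apply_aux {k : Type*} [Field k] [CharZero k] {V : Type*} [AddCommGroup V] [Module k V]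
    [Module ℚ V]
    (a : Module.End k V) (ha : IsNilpotent a) (v : V) (h3 : a (a (a v)) = 0) :
    IsNilpotent.exp a v = v + a v + (2 : ℚ)⁻¹ • a (a v) := by
  obtain ⟨n, hn⟩ := ha
  rw [IsNilpotent.exp_eq_sum (k := n + 3) (pow_eq_zero_of_le (by omega) hn)]
  have hz : ∀ m : ℕ, (a ^ (m + 3)) v = 0 := by
    intro m
    rw [pow_add, Module.End.mul_apply]
    simp [pow_succ, h3]
  rw [LinearMap.sum_apply, add_comm n 3, Finset.sum_range_add,
    Finset.sum_eq_zero (s := Finset.range n)]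
  · simp [Finset.sum_range_succ, pow_succ, Nat.factorial]
  · intro m _
    rw [LinearMap.smul_apply, add_comm 3 m, hz, smul_zero]

/-- The eigenspaces `g_i` and `g_{-i}` of `ad H` have the same dimension. -/
theorem stmt15 {k : Type*} [Field k] [CharZero k]
    {g : Type*} [LieRing g] [LieAlgebra k g] [FiniteDimensional k g]
    (H x Y : g) (hHx : ⁅H, x⁆ = (2 : k) • x) (hHY : ⁅H, Y⁆ = (-2 : k) • Y)
    (hxY : ⁅x, Y⁆ = H) :
    ∀ i : ℤ, Module.finrank k (gwt k H i) = Module.finrank k (gwt k H (-i)) := by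
  let : Module ℚ g := Module.compHom g (algebraMap ℚ k)
  let : IsScalarTower ℚ k g := IsScalarTower.of_algebraMap_smul (fun _ _ => rfl)
  let : LieAlgebra ℚ g := { lie_smul := fun q a b => lie_smul (algebraMap ℚ k q) a b }
  have hn : ∀ (e : g) (c : k), c ≠ 0 → ⁅H, e⁆ = c • e →
      IsNilpotent (LieDerivation.ad k g e).toLinearMap := by
    intro e c hc he
    refine nilp_aux (LieAlgebra.ad k g H) _ c hc ?_
    ext z
    have := leibniz_lie H e z
    simp only [he, smul_lie] at this
    simp [this]
  have hnx := hn x 2 two_ne_zero hHx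
  have hnY := hn (-Y) (-2) (by simp) (by rw [lie_neg, hHY, smul_neg])
  have hxH : ⁅x, H⁆ = (-2 : k) • x := by rw [← lie_skew, hHx, neg_smul]
  have hYH : ⁅Y, H⁆ = (2 : k) • Y := by rw [← lie_skew, hHY, neg_smul, neg_neg]
  have hYx : ⁅Y, x⁆ = -H := by rw [← lie_skew, hxY]
  let E := LieDerivation.exp _ hnx
  let F := LieDerivation.exp _ hnY
  have h1 : E H = H - (2 : k) • x := by
    simp only [E, F]
    rw [LieDerivation.exp_map_apply, exp_apply_aux _ hnx] <;> simp [hxH, sub_eq_add_neg]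
  have h2 : E x = x := by
    simp only [E, F]
    rw [LieDerivation.exp_map_apply, exp_apply_aux _ hnx] <;> simp
  have h3 : F H = H - (2 : k) • Y := by
    simp only [E, F]
    rw [LieDerivation.exp_map_apply, exp_apply_aux _ hnY] <;> simp [hYH, sub_eq_add_neg]
  have h4 : F x = x + H - Y := by
    simp only [E, F]
    rw [LieDerivation.exp_map_apply, exp_apply_aux _ hnY]
    · have : (2 : ℚ)⁻¹ • (2 : k) • Y = Y := by
        rw [← smul_assoc, Algebra.smul_def]; simp
      simp [hYH, hYx, this, sub_eq_add_neg]
    · simp [hYH, hYx]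
  let θ : g ≃ₗ⁅k⁆ g := (E.trans F).trans E
  have hθ : θ H = -H := by
    change E (F (E H)) = -H
    rw [h1, map_sub, map_smul, h3, h4]
    have : H - (2 : k) • Y - (2 : k) • (x + H - Y) = -H - (2 : k) • x := by module
    rw [this, map_sub, map_neg, map_smul, h1, h2]
    module
  intro i
  have hmap : (gwt k H i).map (θ.toLinearEquiv : g →ₗ[k] g) = gwt k H (-i) := by
    ext z
    obtain ⟨w, rfl⟩ := θ.surjective z
    have key : ⁅H, θ w⁆ = - θ ⁅H, w⁆ := by
      rw [LieEquiv.map_lie, hθ, neg_lie, neg_neg]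
    have e1 : θ w ∈ gwt k H (-i) ↔ w ∈ gwt k H i := by
      change ⁅H, θ w⁆ = ((-i : ℤ) : k) • θ w ↔ ⁅H, w⁆ = (i : k) • w
      rw [key, Int.cast_neg, neg_smul, neg_inj, ← map_smul]
      exact θ.injective.eq_iff
    refine Iff.trans ?_ e1.symm
    exact Submodule.mem_map_equiv (e := θ.toLinearEquiv) (x := θ w) (gwt k H i) |>.trans (by
      change θ.symm (θ w) ∈ _ ↔ _
      rw [LieEquiv.symm_apply_apply])
  rw [← hmap]
  exact (LinearEquiv.finrank_map_eq θ.toLinearEquiv _).symm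
end
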